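/- There exists a 2-(24,4,1) packing with 42 blocks whose leave is a vertex-disjoint union of three cycles of length 3 and one cycle of length 15, covering all 24 points (leave type 3^3 15^1). -/

import Mathlib

/-!
Let `τ` be a permutation of the 24 points with cycles of lengths 3, 3, 3, 15; its orbit graph,
with edges `{p, τ p}`, is to be the leave. The rotation `τ ^ 5` preserves this graph and has order
three, so one looks for 14 base blocks whose translates under `⟨τ ^ 5⟩` form the packing. A
translate of a base block meets another one in two points only if the two coincide, which makes
the `3 * 14 = 42` translates a packing, and no base block contains an edge `{p, τ p}`, so the leave
contains the orbit graph. The blocks cover `42 * 6` pairs and `276 - 42 * 6 = 24` is the number of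
edges of the orbit graph, so the leave has no other edge.
-/

/-- A 2-(24,4,1) packing: a collection of 4-element blocks on 24 points such that
every pair of distinct points lies in at most one block. -/
def IsPacking (B : Finset (Finset (Fin 24))) : Prop :=
  (∀ b ∈ B, b.card = 4) ∧
  ∀ p q : Fin 24, p ≠ q → ∀ b₁ ∈ B, ∀ b₂ ∈ B,
    p ∈ b₁ → q ∈ b₁ → p ∈ b₂ → q ∈ b₂ → b₁ = b₂

/-- Adjacency in the leave of a packing: the pair of distinct points is covered by no block. -/
def LeaveAdj (B : Finset (Finset (Fin 24))) (p q : Fin 24) : Prop :=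
  p ≠ q ∧ ∀ b ∈ B, ¬ (p ∈ b ∧ q ∈ b)

/-- The leave of the packing `B` is a vertex-disjoint union of cycles whose lengths are
given by the list `L`, covering all 24 points. -/
def LeaveIsCycleType (B : Finset (Finset (Fin 24))) (L : List ℕ) : Prop :=
  ∃ f : (i : Fin L.length) → ZMod (L.get i) → Fin 24,
    Function.Bijective (fun x : Σ i : Fin L.length, ZMod (L.get i) => f x.1 x.2) ∧
    ∀ p q : Fin 24, LeaveAdj B p q ↔
      ∃ i k, (p = f i k ∧ q = f i (k + 1)) ∨ (q = f i k ∧ p = f i (k + 1))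

section Development

open Finset
open scoped Pointwise

variable (G : Type*) {ι α : Type*} [Group G] [MulAction G α] [DecidableEq α]

/-- The development of a family of base blocks under a finite group `G` of symmetries: the
collection of all translates `g • base i` of base blocks. -/
def development [Fintype G] [Fintype ι] (base : ι → Finset α) : Finset (Finset α) :=
  univ.image fun x : G × ι => x.1 • base x.2

/-- The difference condition on a family of base blocks under a group `G` of symmetries: a base
block shares two points with a translate of a base block only if they are the same block,
translated by `1`. -/
def IsBaseFamily (base : ι → Finset α) : Prop :=
  ∀ (g : G) (i j : ι), 1 < #(base i ∩ g • base j) → g = 1 ∧ i = j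

variable {G} {base : ι → Finset α}

section Translates

variable [Fintype G] [Fintype ι]

theorem mem_development {b : Finset α} :
    b ∈ development G base ↔ ∃ (g : G) (i : ι), g • base i = b := by
  simp only [development, mem_image, mem_univ, true_and, Prod.exists]

theorem card_of_mem_development {k : ℕ} (hk : ∀ i, #(base i) = k) :
    ∀ b ∈ development G base, #b = k := by
  intro b hb
  obtain ⟨g, i, rfl⟩ := mem_development.mp hb
  rw [card_smul_finset, hk i]

theorem apply_notMem_of_mem_development {τ : α → α}
    (hτ : ∀ (g : G) (p : α), τ (g • p) = g • τ p) (hbase : ∀ i, ∀ p ∈ base i, τ p ∉ base i) :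
    ∀ b ∈ development G base, ∀ p ∈ b, τ p ∉ b := by
  intro b hb p hp
  obtain ⟨g, i, rfl⟩ := mem_development.mp hb
  rw [← inv_smul_mem_iff] at hp ⊢
  rw [← hτ]
  exact hbase i _ hp

end Translates

namespace IsBaseFamily

theorem eq_and_eq_of_one_lt_card_inter (h : IsBaseFamily G base) {g g' : G} {i j : ι}
    (hcard : 1 < #(g • base i ∩ g' • base j)) : g = g' ∧ i = j := by
  have hsmul : g • base i ∩ g' • base j = g • (base i ∩ (g⁻¹ * g') • base j) := by
    rw [smul_finset_inter, smul_smul, mul_inv_cancel_left]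
  rw [hsmul, card_smul_finset] at hcard
  exact (h _ i j hcard).imp_left inv_mul_eq_one.mp

variable [Fintype G] [Fintype ι]

theorem card_development (h : IsBaseFamily G base) (hbase : ∀ i, 1 < #(base i)) :
    #(development G base) = Fintype.card G * Fintype.card ι := by
  have hinj : Function.Injective fun x : G × ι => x.1 • base x.2 := by
    rintro ⟨g, i⟩ ⟨g', j⟩ (heq : g • base i = g' • base j)
    have hcard : 1 < #(g • base i ∩ g' • base j) := by
      rw [← heq, inter_self, card_smul_finset]
      exact hbase i
    exact Prod.ext_iff.mpr (h.eq_and_eq_of_one_lt_card_inter hcard)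
  rw [development, card_image_of_injective _ hinj, card_univ, Fintype.card_prod]

theorem pairwise_card_inter_le_one (h : IsBaseFamily G base) :
    (development G base : Set (Finset α)).Pairwise fun b c => #(b ∩ c) ≤ 1 := by
  intro b hb c hc hne
  obtain ⟨g, i, rfl⟩ := mem_development.mp hb
  obtain ⟨g', j, rfl⟩ := mem_development.mp hc
  by_contra! hcard
  obtain ⟨rfl, rfl⟩ := h.eq_and_eq_of_one_lt_card_inter hcard
  exact hne rfl

end IsBaseFamily

end Development

section Pairs

open Finset

variable {α : Type*} [DecidableEq α]

/-- The ordered pairs of distinct points that lie together in some block of `B`. -/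
def coveredPairs (B : Finset (Finset α)) : Finset (α × α) :=
  B.biUnion offDiag

theorem card_coveredPairs {B : Finset (Finset α)} {k : ℕ} (hk : ∀ b ∈ B, #b = k)
    (hB : (B : Set (Finset α)).Pairwise fun b c => #(b ∩ c) ≤ 1) :
    #(coveredPairs B) = #B * (k * k - k) := by
  have hdisj : (B : Set (Finset α)).PairwiseDisjoint offDiag := by
    intro b hb c hc hne
    rw [Function.onFun, disjoint_iff_inter_eq_empty, ← offDiag_inter, ← coe_eq_empty,
      coe_offDiag, Set.offDiag_eq_empty]
    exact card_le_one_iff_subsingleton.mp (hB hb hc hne)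
  rw [coveredPairs, card_biUnion hdisj]
  exact sum_const_nat fun b hb => by rw [offDiag_card, hk b hb]

/-- The adjacent ordered pairs of the orbit graph of `τ`, whose edges are the `{p, τ p}`. -/
def orbitPairs [Fintype α] (τ : Equiv.Perm α) : Finset (α × α) :=
  univ.image (fun p => (p, τ p)) ∪ univ.image fun p => (τ p, p)

theorem mem_orbitPairs [Fintype α] {τ : Equiv.Perm α} {p q : α} :
    (p, q) ∈ orbitPairs τ ↔ q = τ p ∨ p = τ q := by
  simp [orbitPairs, eq_comm]

theorem card_orbitPairs [Fintype α] {τ : Equiv.Perm α} (hτ : ∀ p, τ (τ p) ≠ p) :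
    #(orbitPairs τ) = 2 * Fintype.card α := by
  have hdisj : Disjoint (univ.image fun p => (p, τ p)) (univ.image fun p => (τ p, p)) := by
    simp only [disjoint_left, mem_image, mem_univ, true_and]
    rintro _ ⟨p, rfl⟩ ⟨q, hq⟩
    obtain ⟨rfl, hfix⟩ := Prod.mk.inj hq
    exact hτ q hfix.symm
  rw [orbitPairs, card_union_of_disjoint hdisj,
    card_image_of_injective _ fun _ _ h => congrArg Prod.fst h,
    card_image_of_injective _ fun _ _ h => congrArg Prod.snd h, card_univ, two_mul]

end Pairs

section Leave

open Finset

variable {B : Finset (Finset (Fin 24))}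

theorem isPacking_iff_pairwise_card_inter_le_one :
    IsPacking B ↔ (∀ b ∈ B, #b = 4) ∧
      (B : Set (Finset (Fin 24))).Pairwise fun b c => #(b ∩ c) ≤ 1 := by
  refine and_congr_right fun _ => ⟨fun h b hb c hc hne => ?_, fun h p q hpq b hb c hc => ?_⟩
  · simp only [card_le_one, mem_inter]
    rintro p ⟨hpb, hpc⟩ q ⟨hqb, hqc⟩
    by_contra hpq
    exact hne (h p q hpq b hb c hc hpb hqb hpc hqc)
  · intro hpb hqb hpc hqc
    by_contra hne
    exact hpq (card_le_one.mp (h hb hc hne) p (mem_inter.mpr ⟨hpb, hpc⟩) q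
      (mem_inter.mpr ⟨hqb, hqc⟩))

theorem LeaveAdj.symm {p q : Fin 24} (h : LeaveAdj B p q) : LeaveAdj B q p :=
  ⟨h.1.symm, fun b hb hqp => h.2 b hb hqp.symm⟩

theorem leaveAdj_iff_mem_sdiff_coveredPairs {p q : Fin 24} :
    LeaveAdj B p q ↔ (p, q) ∈ univ.offDiag \ coveredPairs B := by
  simp only [LeaveAdj, coveredPairs, mem_sdiff, mem_offDiag, mem_univ, true_and, mem_biUnion]
  grind

theorem IsPacking.card_sdiff_coveredPairs_add (hB : IsPacking B) :
    #(univ.offDiag \ coveredPairs B) + #B * (4 * 3) = 24 * 23 := by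
  obtain ⟨hfour, hinter⟩ := isPacking_iff_pairwise_card_inter_le_one.mp hB
  have hsub : coveredPairs B ⊆ univ.offDiag :=
    biUnion_subset.mpr fun b _ => offDiag_mono (subset_univ b)
  have hcard := card_sdiff_add_card_eq_card hsub
  rwa [card_coveredPairs hfour hinter, offDiag_card, card_univ, Fintype.card_fin] at hcard

theorem IsPacking.leaveAdj_iff_of_card_eq (hB : IsPacking B) (hcard : #B = 42)
    {τ : Equiv.Perm (Fin 24)} (hτ : ∀ p, τ (τ p) ≠ p) (hleave : ∀ p, LeaveAdj B p (τ p))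
    (p q : Fin 24) : LeaveAdj B p q ↔ q = τ p ∨ p = τ q := by
  have hsub : orbitPairs τ ⊆ univ.offDiag \ coveredPairs B := by
    rintro ⟨p, q⟩ hpq
    rw [← leaveAdj_iff_mem_sdiff_coveredPairs]
    rcases mem_orbitPairs.mp hpq with rfl | rfl
    · exact hleave p
    · exact (hleave q).symm
  have hle : #(univ.offDiag \ coveredPairs B) ≤ #(orbitPairs τ) := by
    have := hB.card_sdiff_coveredPairs_add
    rw [card_orbitPairs hτ, Fintype.card_fin]
    omega
  rw [leaveAdj_iff_mem_sdiff_coveredPairs, ← eq_of_subset_of_card_le hsub hle, mem_orbitPairs]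

theorem leaveIsCycleType_of_leaveAdj_iff {L : List ℕ} {τ : Fin 24 → Fin 24}
    {f : (i : Fin L.length) → ZMod (L.get i) → Fin 24}
    (hf : Function.Bijective fun x : Σ i : Fin L.length, ZMod (L.get i) => f x.1 x.2)
    (hτ : ∀ i k, f i (k + 1) = τ (f i k))
    (hleave : ∀ p q, LeaveAdj B p q ↔ q = τ p ∨ p = τ q) : LeaveIsCycleType B L := by
  refine ⟨f, hf, fun p q => (hleave p q).trans ⟨?_, ?_⟩⟩
  · rintro (rfl | rfl)
    · obtain ⟨⟨i, k⟩, rfl⟩ := hf.surjective p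
      exact ⟨i, k, Or.inl ⟨rfl, (hτ i k).symm⟩⟩
    · obtain ⟨⟨i, k⟩, rfl⟩ := hf.surjective q
      exact ⟨i, k, Or.inr ⟨rfl, (hτ i k).symm⟩⟩
  · rintro ⟨i, k, ⟨rfl, rfl⟩ | ⟨rfl, rfl⟩⟩
    · exact Or.inl (hτ i k)
    · exact Or.inr (hτ i k)

end Leave

theorem apply_zpowers_pow_smul {α : Type*} (τ : Equiv.Perm α) (n : ℕ)
    (g : Subgroup.zpowers (τ ^ n)) (p : α) : τ (g • p) = g • τ p := by
  obtain ⟨_, i, rfl⟩ := g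
  exact DFunLike.congr_fun (((Commute.refl τ).pow_right n).zpow_right i).eq p

section Construction

open Finset Equiv
open scoped Pointwise

/-- The permutation `τ` of the points with cycles of lengths 3, 3, 3, 15 whose orbit graph, with
edges `{p, τ p}`, is the leave of the packing. -/
def leaveRotation : Perm (Fin 24) :=
  c[0, 1, 2] * c[3, 4, 5] * c[6, 7, 8] *
    c[9, 10, 11, 12, 13, 14, 15, 16, 17, 18, 19, 20, 21, 22, 23]

/-- The symmetry group of the packing, of order three. -/
abbrev packingSymmetry : Subgroup (Perm (Fin 24)) :=
  Subgroup.zpowers (leaveRotation ^ 5)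

/-- Representatives of the orbits of blocks of the packing under `packingSymmetry`. -/
def baseBlock : Fin 14 → Finset (Fin 24) :=
  ![{0, 3, 6, 15}, {0, 5, 9, 21}, {0, 4, 12, 17}, {0, 8, 14, 23}, {0, 7, 16, 20},
    {0, 10, 19, 22}, {0, 11, 13, 18}, {3, 8, 10, 13}, {3, 7, 12, 23}, {3, 9, 11, 20},
    {3, 14, 18, 21}, {6, 11, 16, 22}, {6, 12, 14, 19}, {10, 12, 18, 20}]

/-- The packing with 42 blocks and leave of type `3³ 15¹`. -/
noncomputable def maxPacking : Finset (Finset (Fin 24)) :=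
  development packingSymmetry baseBlock

/-- A parametrization of the cycles of `leaveRotation`: the `i`-th one starts at the point `3 * i`
and runs through consecutive points. -/
def leaveCycle (i : Fin [3, 3, 3, 15].length) (k : ZMod ([3, 3, 3, 15].get i)) : Fin 24 :=
  Fin.ofNat 24 (3 * i + k.val)

instance neZero_cycleLength (i : Fin [3, 3, 3, 15].length) : NeZero ([3, 3, 3, 15].get i) :=
  ⟨by decide +revert⟩

theorem leaveCycle_bijective :
    Function.Bijective fun x : Σ i : Fin [3, 3, 3, 15].length, ZMod ([3, 3, 3, 15].get i) =>
      leaveCycle x.1 x.2 := by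
  decide +kernel

theorem leaveCycle_add_one :
    ∀ i k, leaveCycle i (k + 1) = leaveRotation (leaveCycle i k) := by
  decide +kernel

theorem leaveRotation_leaveRotation_ne : ∀ p, leaveRotation (leaveRotation p) ≠ p := by
  decide +kernel

theorem orderOf_leaveRotation_pow_five : orderOf (leaveRotation ^ 5) = 3 :=
  orderOf_eq_prime (by decide +kernel) (by decide +kernel)

theorem card_baseBlock : ∀ i, #(baseBlock i) = 4 := by
  decide +kernel

theorem leaveRotation_notMem_baseBlock :
    ∀ i, ∀ p ∈ baseBlock i, leaveRotation p ∉ baseBlock i := by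
  decide +kernel

theorem isBaseFamily_baseBlock : IsBaseFamily packingSymmetry baseBlock := by
  have hpow : ∀ (n : Fin 3) (i j : Fin 14),
      1 < #(baseBlock i ∩ (leaveRotation ^ 5) ^ (n : ℕ) • baseBlock j) → n = 0 ∧ i = j := by
    decide +kernel
  rintro ⟨_, hg⟩ i j hcard
  obtain ⟨n, hn, rfl⟩ := mem_image.mp (mem_zpowers_iff_mem_range_orderOf.mp hg)
  rw [mem_range, orderOf_leaveRotation_pow_five] at hn
  obtain ⟨hzero, hij⟩ := hpow ⟨n, hn⟩ i j hcard
  obtain rfl : n = 0 := congrArg Fin.val hzero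
  exact ⟨Subtype.ext (pow_zero _), hij⟩

theorem isPacking_maxPacking : IsPacking maxPacking :=
  isPacking_iff_pairwise_card_inter_le_one.mpr
    ⟨card_of_mem_development card_baseBlock, isBaseFamily_baseBlock.pairwise_card_inter_le_one⟩

theorem card_maxPacking : #maxPacking = 42 := by
  have hbase : ∀ i, 1 < #(baseBlock i) := fun i => by rw [card_baseBlock i]; norm_num
  rw [maxPacking, isBaseFamily_baseBlock.card_development hbase, Fintype.card_zpowers,
    orderOf_leaveRotation_pow_five, Fintype.card_fin]

theorem leaveAdj_maxPacking_leaveRotation (p : Fin 24) :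
    LeaveAdj maxPacking p (leaveRotation p) := by
  refine ⟨fun hp => leaveRotation_leaveRotation_ne p ?_, fun b hb ⟨hp, hq⟩ => ?_⟩
  · rw [← hp, ← hp]
  · exact apply_notMem_of_mem_development (apply_zpowers_pow_smul leaveRotation 5)
      leaveRotation_notMem_baseBlock b hb p hp hq

end Construction

/-- There is a 2-(24,4,1) packing with 42 blocks whose leave is a vertex-disjoint
union of cycles of lengths [3, 3, 3, 15], covering all 24 points. -/
theorem exists_max_packing_with_leave_type :
    ∃ B : Finset (Finset (Fin 24)), IsPacking B ∧ B.card = 42 ∧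
      LeaveIsCycleType B [3, 3, 3, 15] := by
  have hleave := isPacking_maxPacking.leaveAdj_iff_of_card_eq card_maxPacking
    leaveRotation_leaveRotation_ne leaveAdj_maxPacking_leaveRotation
  exact ⟨maxPacking, isPacking_maxPacking, card_maxPacking,
    leaveIsCycleType_of_leaveAdj_iff leaveCycle_bijective leaveCycle_add_one hleave⟩
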